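/- Fix constants 0 < q < p < 1 and K > 0. There exists M > 0 such that for all sufficiently large n, all integers Δ ≥ 0 with 0 ≤ Δ' ≤ K·√(n·log n), and all real p̃ with |p̃ − p| ≤ K·(log n)/n, setting k := ⌊n·p̃⌋ and m := ⌈√(n/log n)⌉, one has P[Bin(n+Δ, q) = k + m] ≥ (1/M)·P[Bin(n+Δ, q) = k]. -/

import Mathlib

/-!
Write `L = n + Δ`, `ℓ = log n` and `t = √(n / ℓ)`. Consecutive binomial weights satisfy
`P[j + 1] / P[j] = (L - j) q / ((j + 1) (1 - q)) = 1 - (j + 1 - q - L q) / ((j + 1) (1 - q))`.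
The hypothesis on `Δ'` says that the mean `L q = p n - q Δ'` lies at most `q K √(n ℓ)` below `p n`.
So for `k ≤ j < k + m` the numerator on the right is at most `(2 K + 2) √(n ℓ)`, while
`j + 1 ≥ p n / 2`. Each of the `m ≤ 2 t` factors is therefore at least `1 - A / t` with
`A = 2 (2 K + 2) / (p (1 - q))`, and their product is at least `exp (-4 A)`, because
`1 - x ≥ exp (-2 x)` for `0 ≤ x ≤ 1 / 2`.

Once `ℓ ≥ 1`, every largeness requirement is a lower bound on `t`; the identities `n = t² ℓ` and
`√(n ℓ) = t ℓ` make all estimates polynomial in `t` and `ℓ`.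
-/

open Finset

/-- Probability mass function of the binomial distribution `Bin(m, r)`. -/
noncomputable def binomPMF (m : ℕ) (r : ℝ) (k : ℕ) : ℝ :=
  (m.choose k : ℝ) * r ^ k * (1 - r) ^ (m - k)

/-- `P[X ∈ P]` for `X ~ Bin(m, r)`. -/
noncomputable def binomProb (m : ℕ) (r : ℝ) (P : ℕ → Prop) : ℝ :=
  ∑ k ∈ Finset.range (m + 1), Set.indicator {k | P k} (binomPMF m r) k

/-- `P[(X, Y) ∈ P]` for independent `X ~ Bin(m₁, r₁)` and `Y ~ Bin(m₂, r₂)`. -/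
noncomputable def binomProb2 (m₁ : ℕ) (r₁ : ℝ) (m₂ : ℕ) (r₂ : ℝ) (P : ℕ → ℕ → Prop) : ℝ :=
  ∑ j ∈ Finset.range (m₁ + 1), ∑ k ∈ Finset.range (m₂ + 1),
    Set.indicator {jk : ℕ × ℕ | P jk.1 jk.2}
      (fun jk => binomPMF m₁ r₁ jk.1 * binomPMF m₂ r₂ jk.2) (j, k)

/-- For `j > m` both sides vanish. -/
lemma binomProb_eq_point (m : ℕ) (r : ℝ) (j : ℕ) :
    binomProb m r (fun i => i = j) = binomPMF m r j := by
  unfold binomProb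
  by_cases hj : j ≤ m
  · rw [Finset.sum_eq_single j]
    · simp [Set.indicator]
    · intro b _ hb
      simp [Set.indicator, hb]
    · intro h
      exact absurd (Finset.mem_range.2 (by omega)) h
  · rw [Finset.sum_eq_zero]
    · simp [binomPMF, Nat.choose_eq_zero_of_lt (not_le.1 hj)]
    · intro i hi
      have : i ≠ j := by
        have := Finset.mem_range.1 hi
        omega
      simp [Set.indicator, this]

lemma binomPMF_nonneg (m : ℕ) (r : ℝ) (h0 : 0 ≤ r) (h1 : r ≤ 1) (k : ℕ) :
    0 ≤ binomPMF m r k := by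
  have : 0 ≤ 1 - r := by linarith
  unfold binomPMF
  positivity

lemma binomPMF_succ (m : ℕ) (r : ℝ) (k : ℕ) :
    ((k : ℝ) + 1) * (1 - r) * binomPMF m r (k + 1) = ((m : ℝ) - k) * r * binomPMF m r k := by
  unfold binomPMF
  rcases lt_or_ge k m with h | h
  · have hc : (m.choose (k + 1) : ℝ) * ((k : ℝ) + 1) = (m.choose k : ℝ) * ((m : ℝ) - k) := by
      have := Nat.choose_succ_right_eq m k
      rw [← Nat.cast_sub h.le]
      exact_mod_cast this
    have he : m - k = (m - (k + 1)) + 1 := by omega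
    rw [he, pow_succ, pow_succ]
    linear_combination r ^ k * r * (1 - r) ^ (m - (k + 1)) * (1 - r) * hc
  · rw [Nat.choose_eq_zero_of_lt (by omega : m < k + 1)]
    rcases h.eq_or_lt with h | h
    · simp [h]
    · simp [Nat.choose_eq_zero_of_lt h]

/-- If each of the `m` consecutive ratios after `k` is at least `1 - δ`, the weights decrease by
at most a factor `(1 - δ) ^ m`. -/
lemma binomPMF_shift_ge (L : ℕ) (q δ : ℝ) (h0 : 0 < q) (h1 : q < 1) (hδ : δ ≤ 1) (k m : ℕ)
    (h : ∀ j : ℕ, k ≤ j → j < k + m →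
      (1 - δ) * (((j : ℝ) + 1) * (1 - q)) ≤ ((L : ℝ) - j) * q) :
    (1 - δ) ^ m * binomPMF L q k ≤ binomPMF L q (k + m) := by
  induction m with
  | zero => simp
  | succ m ih =>
    have ih' := ih fun j hj hj' => h j hj (by omega)
    have hs := h (k + m) (by omega) (by omega)
    have hrec := binomPMF_succ L q (k + m)
    have hpos : 0 < (((k + m : ℕ) : ℝ) + 1) * (1 - q) :=
      mul_pos (by positivity) (by linarith)
    have hB := binomPMF_nonneg L q h0.le h1.le (k + m)
    have step : (1 - δ) * binomPMF L q (k + m) ≤ binomPMF L q (k + m + 1) := by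
      refine le_of_mul_le_mul_left ?_ hpos
      rw [hrec]
      calc _ = (1 - δ) * ((((k + m : ℕ) : ℝ) + 1) * (1 - q)) * binomPMF L q (k + m) := by ring
        _ ≤ _ := mul_le_mul_of_nonneg_right hs hB
    calc (1 - δ) ^ (m + 1) * binomPMF L q k
        = (1 - δ) * ((1 - δ) ^ m * binomPMF L q k) := by ring
      _ ≤ (1 - δ) * binomPMF L q (k + m) :=
          mul_le_mul_of_nonneg_left ih' (by linarith)
      _ ≤ _ := step

lemma exp_neg_two_mul_le_one_sub {x : ℝ} (h0 : 0 ≤ x) (h1 : x ≤ 1 / 2) :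
    Real.exp (-(2 * x)) ≤ 1 - x := by
  have h := Real.add_one_le_exp (2 * x)
  rw [Real.exp_neg]
  refine inv_le_of_inv_le₀ (by linarith) (le_trans ?_ h)
  rw [inv_le_iff_one_le_mul₀ (by linarith)]
  nlinarith

lemma eventually_log_and_quotient_large (B : ℝ) :
    ∃ N : ℕ, ∀ n : ℕ, N ≤ n → 1 ≤ Real.log n ∧ B ≤ Real.sqrt (n / Real.log n) := by
  have hlog : Filter.Tendsto (fun n : ℕ => Real.log n) Filter.atTop Filter.atTop :=
    Real.tendsto_log_atTop.comp tendsto_natCast_atTop_atTop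
  have ho : Filter.Tendsto (fun n : ℕ => Real.log n / n) Filter.atTop (nhds 0) :=
    (Real.isLittleO_log_id_atTop.tendsto_div_nhds_zero).comp tendsto_natCast_atTop_atTop
  have e1 := hlog.eventually_ge_atTop 1
  have e2 := ho.eventually_lt_const (show (0 : ℝ) < 1 / (B ^ 2 + 1) by positivity)
  obtain ⟨N, hN⟩ := Filter.eventually_atTop.1 (e1.and (e2.and (Filter.eventually_ge_atTop 1)))
  refine ⟨N, fun n hn => ?_⟩
  obtain ⟨a, b, c⟩ := hN n hn
  refine ⟨a, Real.le_sqrt_of_sq_le ?_⟩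
  have hn0 : (0 : ℝ) < n := by exact_mod_cast c
  rw [div_lt_div_iff₀ hn0 (by positivity)] at b
  rw [le_div_iff₀ (by linarith)]
  nlinarith

/-- equation (2.5) / `eqratio` in the proof of Lemma 2.8.
Fix constants `0 < q < p < 1` and `K > 0`.  There exists `M > 0` such that for all sufficiently
large `n`, all integers `Δ ≥ 0` with `0 ≤ Δ' ≤ K·√(n·log n)` (where `Δ' = ((p−q)/q)·n − Δ`),
and all real `p'` with `|p' − p| ≤ K·(log n)/n`, setting `k := ⌊n·p'⌋` and
`m := ⌈√(n/log n)⌉`, one has `P[Bin(n+Δ, q) = k + m] ≥ (1/M)·P[Bin(n+Δ, q) = k]`. -/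
theorem binomial_pmf_shift_ratio_bound
    (p q K : ℝ) (hq : 0 < q) (hqp : q < p) (hp : p < 1) (hK : 0 < K) :
    ∃ M : ℝ, 0 < M ∧ ∃ N : ℕ, ∀ n : ℕ, N ≤ n → ∀ Δ : ℕ,
      0 ≤ ((p - q) / q) * n - Δ →
      ((p - q) / q) * n - Δ ≤ K * Real.sqrt (n * Real.log n) →
      ∀ p' : ℝ, |p' - p| ≤ K * Real.log n / n →
        binomProb (n + Δ) q
            (fun j => j = ⌊(n : ℝ) * p'⌋₊ + ⌈Real.sqrt ((n : ℝ) / Real.log n)⌉₊)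
          ≥ 1 / M * binomProb (n + Δ) q (fun j => j = ⌊(n : ℝ) * p'⌋₊) := by
  have hp0 : 0 < p := hq.trans hqp
  have hq1 : 0 < 1 - q := by linarith
  obtain ⟨A, hA⟩ : ∃ A : ℝ, A = 2 * (2 * K + 2) / (p * (1 - q)) := ⟨_, rfl⟩
  have hApos : 0 < A := by rw [hA]; positivity
  have hAeq : A * (p * (1 - q)) = 2 * (2 * K + 2) := by
    rw [hA]; field_simp
  obtain ⟨N, hN⟩ := eventually_log_and_quotient_large (1 + 2 * A + 2 * (K + 1) / p)
  refine ⟨Real.exp (4 * A), Real.exp_pos _, N, fun n hn Δ _ hΔ p' hp' => ?_⟩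
  obtain ⟨hl, ht⟩ := hN n hn
  rw [binomProb_eq_point, binomProb_eq_point]
  obtain ⟨l, hl_def⟩ : ∃ l : ℝ, l = Real.log n := ⟨_, rfl⟩
  obtain ⟨t, ht_def⟩ : ∃ t : ℝ, t = Real.sqrt (n / Real.log n) := ⟨_, rfl⟩
  rw [← ht_def] at ht ⊢
  rw [← hl_def] at hl hp' hΔ ht_def
  have hdiv : 0 < 2 * (K + 1) / p := by positivity
  have ht1 : 1 ≤ t := by linarith
  have htA : 2 * A ≤ t := by linarith
  have htK : 2 * (K + 1) ≤ p * t := by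
    have : 2 * (K + 1) / p ≤ t := by linarith
    rw [div_le_iff₀ hp0] at this
    linarith
  have hnt : (n : ℝ) = t ^ 2 * l := by
    rw [ht_def, Real.sq_sqrt (by positivity)]
    field_simp
  have hs : Real.sqrt (n * l) = t * l := by
    rw [hnt, show t ^ 2 * l * l = (t * l) ^ 2 by ring, Real.sqrt_sq (by positivity)]
  have hn0 : (0 : ℝ) < n := by rw [hnt]; positivity
  rw [hs] at hΔ
  have hnp : |n * p' - n * p| ≤ K * l := by
    rw [← mul_sub, abs_mul, abs_of_pos hn0]
    rw [le_div_iff₀ hn0] at hp'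
    linarith
  obtain ⟨hnp1, hnp2⟩ := abs_le.1 hnp
  have hlt : l ≤ t * l := le_mul_of_one_le_left (by linarith) ht1
  have htl : t ≤ t * l := le_mul_of_one_le_right (by linarith) hl
  -- `k` stays above half of `p n`
  have hhalf : K * l + 1 ≤ n * p / 2 := by
    have h1 : 2 * (K + 1) * l ≤ p * t * l := mul_le_mul_of_nonneg_right htK (by linarith)
    have h2 : p * (t * l) ≤ p * (t * (t * l)) :=
      mul_le_mul_of_nonneg_left (le_mul_of_one_le_left (by positivity) ht1) hp0.le
    rw [hnt]
    nlinarith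
  have hkpos : 0 ≤ n * p' := by nlinarith
  have hk1 := Nat.floor_le hkpos
  have hk2 := Nat.lt_floor_add_one ((n : ℝ) * p')
  have hm := Nat.ceil_lt_add_one (show 0 ≤ t by linarith)
  obtain ⟨k, hk⟩ : ∃ k : ℕ, k = ⌊(n : ℝ) * p'⌋₊ := ⟨_, rfl⟩
  obtain ⟨m, hm_def⟩ : ∃ m : ℕ, m = ⌈t⌉₊ := ⟨_, rfl⟩
  rw [← hk] at hk1 hk2 ⊢
  rw [← hm_def] at hm ⊢
  have ht0 : 0 < t := by linarith
  have hδ0 : 0 ≤ A / t := by positivity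
  have hδ1 : A / t ≤ 1 / 2 := by
    rw [div_le_iff₀ ht0]; linarith
  -- the mean `(n + Δ) q` is at least `p n - K √(n log n)`
  have hmean : n * p - K * (t * l) ≤ ((n + Δ : ℕ) : ℝ) * q := by
    have h1 : ((p - q) / q * n - Δ) * q ≤ K * (t * l) * q :=
      mul_le_mul_of_nonneg_right hΔ hq.le
    have h2 : ((p - q) / q * n - Δ) * q = p * n - q * n - Δ * q := by field_simp
    have h3 : K * (t * l) * q ≤ K * (t * l) :=
      mul_le_of_le_one_right (by positivity) (by linarith)
    push_cast
    linarith
  have hshift := binomPMF_shift_ge (n + Δ) q (A / t) hq (by linarith) (by linarith) k m (by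
    intro j hj hj'
    have hj1 : (k : ℝ) ≤ j := by exact_mod_cast hj
    have hj2 : (j : ℝ) + 1 ≤ k + m := by exact_mod_cast hj'
    have hKl : K * l ≤ K * (t * l) := mul_le_mul_of_nonneg_left hlt hK.le
    have hnum : (j : ℝ) + 1 - q - ((n + Δ : ℕ) : ℝ) * q ≤ (2 * K + 2) * (t * l) := by
      linarith
    have hden : (2 * K + 2) * (t * l) ≤ A / t * (((j : ℝ) + 1) * (1 - q)) := by
      have h1 : n * p / 2 ≤ (j : ℝ) + 1 := by linarith
      calc (2 * K + 2) * (t * l) = A / t * (n * p / 2 * (1 - q)) := by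
            rw [hnt]
            field_simp
            linear_combination -hAeq
        _ ≤ _ := by gcongr
    linarith)
  have hPk := binomPMF_nonneg (n + Δ) q hq.le (by linarith) k
  have hpow : 1 / Real.exp (4 * A) ≤ (1 - A / t) ^ m := by
    calc 1 / Real.exp (4 * A) = Real.exp (-(4 * A)) := by rw [Real.exp_neg, one_div]
      _ ≤ Real.exp (m * -(2 * (A / t))) := by
          apply Real.exp_le_exp.2
          have h1 : A / t * m ≤ A / t * (2 * t) :=
            mul_le_mul_of_nonneg_left (by linarith) hδ0
          have h2 : A / t * (2 * t) = 2 * A := by field_simp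
          linarith
      _ = Real.exp (-(2 * (A / t))) ^ m := Real.exp_nat_mul _ _
      _ ≤ _ := pow_le_pow_left₀ (Real.exp_pos _).le (exp_neg_two_mul_le_one_sub hδ0 hδ1) m
  exact (mul_le_mul_of_nonneg_right hpow hPk).trans hshift
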